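/- arXiv:2601.10706 — 5 statements merged into one kernel-verified Lean document; each statement's English description precedes it below -/
import Mathlib

section
/- Let T be a tree on N ≥ 2 vertices in which every vertex has degree at most 3, and let M be a maximal mergeable matching in T, i.e., a matching all of whose edges are mergeable and such that every mergeable edge of T shares an endpoint with some edge of M. Then 6·|M| ≥ N. (Equivalently, contracting the edges of M leaves at most (5/6)·N clusters, so each round of topology-tree contraction reduces the number of clusters by a factor of at least 5/6.) -/
open SimpleGraph Finset

/-!
Give each edge `uv` the charge `1 / deg u + 1 / deg v - 5 / 6`; the charges add up to
`|V| - 5 / 6 * |E|`, which is at least `|V| / 6` as soon as `|E| ≤ |V|`. In maximum degree three,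
only mergeable edges, those with `deg u + deg v ≤ 4`, have positive charge, so all the positive
charge sits on edges meeting `M`. An edge at `a` has charge at most `1 / deg a + 1 / 6`, and `1 / 2`
less if its other end is not a leaf. If `|V| ≥ 5`, connectedness provides an edge of the latter kind
next to every mergeable edge `ab`, whence the edges meeting `ab` carry a positive charge of at most
`(deg a + deg b + 2) / 6 ≤ 1`.
-/

theorem sum_le_sum_sum_filter_posPart {ι κ R : Type*} [AddCommGroup R] [LinearOrder R]
    [IsOrderedAddMonoid R] {s : Finset ι} {t : Finset κ} {f : ι → R} (r : ι → κ → Prop)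
    [∀ i j, Decidable (r i j)] (h : ∀ i ∈ s, 0 < f i → ∃ j ∈ t, r i j) :
    ∑ i ∈ s, f i ≤ ∑ j ∈ t, ∑ i ∈ s with r i j, (f i)⁺ := by
  rw [sum_comm' (t' := s) (s' := fun i => t.filter (r i))
    fun j i => by simp only [mem_filter]; tauto]
  refine sum_le_sum fun i hi => ?_
  obtain hf | hf := le_or_gt (f i) 0
  · exact hf.trans (sum_nonneg fun _ _ => posPart_nonneg _)
  · obtain ⟨j, hj, hij⟩ := h i hi hf
    exact (le_posPart _).trans
      (single_le_sum (f := fun _ => (f i)⁺) (fun _ _ => posPart_nonneg _)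
        (mem_filter.2 ⟨hj, hij⟩))

theorem pair_mem_iff_add_le_four {p q : ℕ} (hp : 0 < p) (hq : 0 < q) :
    ({p, q} : Multiset ℕ) ∈ ({{1, 1}, {1, 2}, {2, 2}, {1, 3}} : Set (Multiset ℕ)) ↔
      p + q ≤ 4 := by
  simp only [Set.mem_insert_iff, Set.mem_singleton_iff]
  constructor
  · intro h
    have hsum : p + q = 1 + 1 ∨ p + q = 1 + 2 ∨ p + q = 2 + 2 ∨ p + q = 1 + 3 := by
      simpa only [Multiset.insert_eq_cons, Multiset.sum_cons, Multiset.sum_singleton] using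
        h.imp (congrArg Multiset.sum) <| .imp (congrArg Multiset.sum) <|
          .imp (congrArg Multiset.sum) (congrArg Multiset.sum)
    omega
  · intro h
    have hp3 : p ≤ 3 := by omega
    have hq3 : q ≤ 3 := by omega
    interval_cases p <;> interval_cases q <;> first | omega | decide

section Graph

variable {V : Type*} {G : SimpleGraph V}

theorem sum_toFinset_mk_of_adj [DecidableEq V] {R : Type*} [AddCommMonoid R] {u v : V}
    (huv : G.Adj u v) (f : V → R) : ∑ x ∈ s(u, v).toFinset, f x = f u + f v := by
  rw [Sym2.toFinset_mk_eq, sum_pair huv.ne]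

variable [Fintype V] [DecidableRel G.Adj]

theorem exists_two_le_degree_of_adj (hG : G.Preconnected) {a b : V} (hab : G.Adj a b)
    (hcard : G.degree a + G.degree b < Fintype.card V) :
    ∃ x, 2 ≤ G.degree x ∧ (G.Adj a x ∧ x ≠ b ∨ G.Adj b x ∧ x ≠ a) := by
  classical
  have hlt : #(G.neighborFinset a ∪ G.neighborFinset b) < #(univ : Finset V) := by
    refine (card_union_le _ _).trans_lt ?_
    rwa [card_neighborFinset_eq_degree, card_neighborFinset_eq_degree, card_univ]
  obtain ⟨y, -, hy⟩ := exists_mem_notMem_of_card_lt_card hlt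
  obtain ⟨p⟩ := hG b y
  obtain ⟨⟨⟨x, z⟩, hxz⟩, -, hx, hz⟩ :=
    p.exists_boundary_dart {v | G.Adj a v ∨ G.Adj b v} (.inl hab) (by simpa using hy)
  simp only [Set.mem_ofPred_eq, not_or] at hx hz
  have two_le_degree {c : V} (hxc : G.Adj x c) (hcz : c ≠ z) : 2 ≤ G.degree x := by
    rw [← card_neighborFinset_eq_degree]
    exact one_lt_card.2 ⟨c, by simpa, z, by simpa, hcz⟩
  have hxa : x ≠ a := by rintro rfl; exact hz.1 hxz
  have hxb : x ≠ b := by rintro rfl; exact hz.2 hxz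
  have haz : a ≠ z := by rintro rfl; exact hz.2 hab.symm
  have hbz : b ≠ z := by rintro rfl; exact hz.1 hab
  obtain hax | hbx := hx
  · exact ⟨x, two_le_degree hax.symm haz, .inl ⟨hax, hxb⟩⟩
  · exact ⟨x, two_le_degree hbx.symm hbz, .inr ⟨hbx, hxa⟩⟩

variable [DecidableEq V]

theorem sum_edgeFinset_sum_toFinset {R : Type*} [AddCommMonoid R] (f : V → R) :
    ∑ e ∈ G.edgeFinset, ∑ v ∈ e.toFinset, f v = ∑ v, G.degree v • f v := by
  rw [sum_comm' (t' := univ) (s' := fun v => G.incidenceFinset v) fun e v => by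
    simp [incidenceSet]]
  simp only [sum_const, card_incidenceFinset_eq_degree]

theorem sum_edges_meeting_add {R : Type*} [AddCommMonoid R] {a b : V} (hab : G.Adj a b)
    (f : Sym2 V → R) :
    ∑ e ∈ G.edgeFinset with ∃ v ∈ e, v ∈ s(a, b), f e + f s(a, b) =
      ∑ e ∈ G.incidenceFinset a, f e + ∑ e ∈ G.incidenceFinset b, f e := by
  have hunion : {e ∈ G.edgeFinset | ∃ v ∈ e, v ∈ s(a, b)} =
      G.incidenceFinset a ∪ G.incidenceFinset b := by
    ext e
    simp [incidenceSet, and_or_left, exists_or]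
  have hinter : G.incidenceFinset a ∩ G.incidenceFinset b = {s(a, b)} := by
    rw [← coe_inj]
    simpa using G.incidenceSet_inter_incidenceSet_of_adj hab
  rw [← sum_union_inter, hinter, sum_singleton, hunion]

variable (G) in
/-- An unordered pair of vertices is mergeable if it is an edge whose end degrees add up to at most
four. The ends of an edge have positive degree, so the pair of degrees is then one of `(1,1)`,
`(1,2)`, `(2,2)`, `(1,3)`; see `isMergeable_mk_iff_pair_mem`. -/
def IsMergeable (e : Sym2 V) : Prop :=
  e ∈ G.edgeSet ∧ ∑ v ∈ e.toFinset, G.degree v ≤ 4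

theorem isMergeable_mk {u v : V} :
    IsMergeable G s(u, v) ↔ G.Adj u v ∧ G.degree u + G.degree v ≤ 4 :=
  and_congr_right fun huv => by rw [sum_toFinset_mk_of_adj huv]

theorem isMergeable_mk_iff_pair_mem {u v : V} :
    IsMergeable G s(u, v) ↔ G.Adj u v ∧ ({G.degree u, G.degree v} : Multiset ℕ) ∈
      ({{1, 1}, {1, 2}, {2, 2}, {1, 3}} : Set (Multiset ℕ)) :=
  isMergeable_mk.trans <| and_congr_right fun huv =>
    (pair_mem_iff_add_le_four huv.degree_pos_left huv.degree_pos_right).symm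

variable (G) in
/-- The charge `1 / deg u + 1 / deg v - 5 / 6` of an edge `uv`, the quantity that is distributed
over a set of mergeable edges in order to bound its size from below. -/
def charge (e : Sym2 V) : ℚ :=
  ∑ v ∈ e.toFinset, (G.degree v : ℚ)⁻¹ - 5 / 6

theorem charge_mk {u v : V} (huv : G.Adj u v) :
    charge G s(u, v) = (G.degree u : ℚ)⁻¹ + (G.degree v : ℚ)⁻¹ - 5 / 6 := by
  rw [charge, sum_toFinset_mk_of_adj huv]

theorem sum_charge (hpos : ∀ v, 0 < G.degree v) :
    ∑ e ∈ G.edgeFinset, charge G e = Fintype.card V - 5 / 6 * #G.edgeFinset := by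
  have hone : ∀ v, G.degree v • (G.degree v : ℚ)⁻¹ = 1 := fun v => by
    rw [nsmul_eq_mul, mul_inv_cancel₀ (Nat.cast_ne_zero.2 (hpos v).ne')]
  simp only [charge, sum_sub_distrib, sum_edgeFinset_sum_toFinset, hone, sum_const, card_univ,
    nsmul_eq_mul, mul_one]
  ring

theorem isMergeable_of_charge_pos (hdeg : ∀ v, G.degree v ≤ 3) {e : Sym2 V} (he : e ∈ G.edgeSet)
    (hcharge : 0 < charge G e) : IsMergeable G e := by
  induction e with | h u v
  have huv : G.Adj u v := he
  refine isMergeable_mk.2 ⟨huv, ?_⟩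
  rw [charge_mk huv] at hcharge
  have hu := huv.degree_pos_left
  have hv := huv.degree_pos_right
  have hu3 := hdeg u
  have hv3 := hdeg v
  by_contra! hsum
  interval_cases G.degree u <;> interval_cases G.degree v <;> first | omega | norm_num at hcharge

theorem exists_isMergeable [Nonempty V] (hpos : ∀ v, 0 < G.degree v) (hdeg : ∀ v, G.degree v ≤ 3)
    (hE : #G.edgeFinset ≤ Fintype.card V) : ∃ e, IsMergeable G e := by
  by_contra! hnone
  have hnonpos : ∑ e ∈ G.edgeFinset, charge G e ≤ 0 := sum_nonpos fun e he =>
    not_lt.1 fun h => hnone e (isMergeable_of_charge_pos hdeg (mem_edgeFinset.1 he) h)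
  rw [sum_charge hpos] at hnonpos
  have hE' : (#G.edgeFinset : ℚ) ≤ Fintype.card V := by exact_mod_cast hE
  have hcard : (0 : ℚ) < Fintype.card V := by exact_mod_cast Fintype.card_pos
  linarith

theorem posPart_charge_mk_le {a x : V} (hax : G.Adj a x) :
    (charge G s(a, x))⁺ ≤ (G.degree a : ℚ)⁻¹ + 1 / 6 := by
  have hx : (G.degree x : ℚ)⁻¹ ≤ 1 := Nat.cast_inv_le_one _
  rw [posPart_def, sup_le_iff, charge_mk hax]
  exact ⟨by linarith, by positivity⟩

theorem posPart_charge_mk_le_of_two_le_degree {a x : V} (hax : G.Adj a x) (ha : G.degree a ≤ 3)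
    (hx : 2 ≤ G.degree x) : (charge G s(a, x))⁺ ≤ (G.degree a : ℚ)⁻¹ - 1 / 3 := by
  have hx' : (G.degree x : ℚ)⁻¹ ≤ 2⁻¹ := inv_anti₀ two_pos (by exact_mod_cast hx)
  have ha' : (3 : ℚ)⁻¹ ≤ (G.degree a : ℚ)⁻¹ :=
    inv_anti₀ (by exact_mod_cast hax.degree_pos_left) (by exact_mod_cast ha)
  rw [posPart_def, sup_le_iff, charge_mk hax]
  exact ⟨by linarith, by linarith⟩

theorem posPart_charge_mk_of_isMergeable {a b : V} (hab : IsMergeable G s(a, b)) :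
    (charge G s(a, b))⁺ = (G.degree a : ℚ)⁻¹ + (G.degree b : ℚ)⁻¹ - 5 / 6 := by
  obtain ⟨hadj, hsum⟩ := isMergeable_mk.1 hab
  rw [posPart_eq_self.2 _, charge_mk hadj]
  rw [charge_mk hadj]
  have ha := hadj.degree_pos_left
  have hb := hadj.degree_pos_right
  have ha3 : G.degree a ≤ 3 := by omega
  have hb3 : G.degree b ≤ 3 := by omega
  interval_cases G.degree a <;> interval_cases G.degree b <;> first | omega | norm_num

variable (G) in
/-- The amount by which the positive charge of an edge `e` at `a` falls short of the upper bound of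
`posPart_charge_mk_le`. -/
def defect (a : V) (e : Sym2 V) : ℚ :=
  (G.degree a : ℚ)⁻¹ + 1 / 6 - (charge G e)⁺

theorem defect_nonneg {a : V} {e : Sym2 V} (he : e ∈ G.incidenceFinset a) : 0 ≤ defect G a e := by
  obtain ⟨hedge, x, rfl⟩ := (G.mem_incidenceFinset a e).1 he
  exact sub_nonneg.2 (posPart_charge_mk_le hedge)

theorem defect_mk_of_isMergeable {a b : V} (hab : IsMergeable G s(a, b)) :
    defect G a s(a, b) = 1 - (G.degree b : ℚ)⁻¹ := by
  rw [defect, posPart_charge_mk_of_isMergeable hab]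
  ring

theorem sum_incidenceFinset_posPart_charge {a : V} (ha : 0 < G.degree a) :
    ∑ e ∈ G.incidenceFinset a, (charge G e)⁺ =
      1 + G.degree a / 6 - ∑ e ∈ G.incidenceFinset a, defect G a e := by
  have ha' : (G.degree a : ℚ) ≠ 0 := Nat.cast_ne_zero.2 ha.ne'
  simp only [defect, sum_sub_distrib, sum_const, card_incidenceFinset_eq_degree, nsmul_eq_mul]
  field_simp
  ring

theorem sum_incidenceFinset_posPart_charge_le {a b : V} (hab : IsMergeable G s(a, b)) :
    ∑ e ∈ G.incidenceFinset a, (charge G e)⁺ ≤ G.degree a / 6 + (G.degree b : ℚ)⁻¹ := by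
  obtain ⟨hadj, -⟩ := isMergeable_mk.1 hab
  have hdefect := single_le_sum (f := defect G a) (fun e he => defect_nonneg he)
    ((G.mem_incidenceFinset a _).2 ((G.mem_incidenceSet a b).2 hadj))
  rw [defect_mk_of_isMergeable hab] at hdefect
  rw [sum_incidenceFinset_posPart_charge hadj.degree_pos_left]
  linarith

theorem sum_incidenceFinset_posPart_charge_le_of_two_le_degree {a b x : V}
    (hab : IsMergeable G s(a, b)) (hax : G.Adj a x) (hxb : x ≠ b) (hx : 2 ≤ G.degree x) :
    ∑ e ∈ G.incidenceFinset a, (charge G e)⁺ ≤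
      G.degree a / 6 + (G.degree b : ℚ)⁻¹ - 1 / 2 := by
  obtain ⟨hadj, hsum⟩ := isMergeable_mk.1 hab
  have hdefect := add_le_sum (f := defect G a) (fun e he => defect_nonneg he)
    ((G.mem_incidenceFinset a _).2 ((G.mem_incidenceSet a b).2 hadj))
    ((G.mem_incidenceFinset a _).2 ((G.mem_incidenceSet a x).2 hax))
    (fun h => hxb (Sym2.congr_right.1 h).symm)
  have hdefect_x : 1 / 2 ≤ defect G a s(a, x) := by
    have hb := hadj.degree_pos_right
    have hcharge := posPart_charge_mk_le_of_two_le_degree hax (by omega) hx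
    rw [defect]
    linarith
  rw [defect_mk_of_isMergeable hab] at hdefect
  rw [sum_incidenceFinset_posPart_charge hadj.degree_pos_left]
  linarith

theorem sum_posPart_charge_meeting_mk_le_one {a b x : V} (hab : IsMergeable G s(a, b))
    (hax : G.Adj a x) (hxb : x ≠ b) (hx : 2 ≤ G.degree x) :
    ∑ e ∈ G.edgeFinset with ∃ v ∈ e, v ∈ s(a, b), (charge G e)⁺ ≤ 1 := by
  obtain ⟨hadj, hsum⟩ := isMergeable_mk.1 hab
  have hcount := sum_edges_meeting_add hadj fun e => (charge G e)⁺
  have hcharge_a := sum_incidenceFinset_posPart_charge_le_of_two_le_degree hab hax hxb hx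
  have hcharge_b := sum_incidenceFinset_posPart_charge_le (Sym2.eq_swap ▸ hab)
  have hcharge_ab := posPart_charge_mk_of_isMergeable hab
  have hsum' : (G.degree a + G.degree b : ℚ) ≤ 4 := by exact_mod_cast hsum
  linarith

theorem sum_posPart_charge_meeting_le_one (hG : G.Preconnected) (hcard : 5 ≤ Fintype.card V)
    {f : Sym2 V} (hf : IsMergeable G f) :
    ∑ e ∈ G.edgeFinset with ∃ v ∈ e, v ∈ f, (charge G e)⁺ ≤ 1 := by
  induction f with | h a b
  obtain ⟨hadj, hsum⟩ := isMergeable_mk.1 hf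
  obtain ⟨x, hx, ⟨hax, hxb⟩ | ⟨hbx, hxa⟩⟩ := exists_two_le_degree_of_adj hG hadj (by omega)
  · exact sum_posPart_charge_meeting_mk_le_one hf hax hxb hx
  · rw [Sym2.eq_swap] at hf ⊢
    exact sum_posPart_charge_meeting_mk_le_one hf hbx hxa hx

theorem card_sub_le_card_of_isMergeable (hG : G.Preconnected) (hcard : 5 ≤ Fintype.card V)
    (hdeg : ∀ v, G.degree v ≤ 3) {M : Finset (Sym2 V)} (hM : ∀ f ∈ M, IsMergeable G f)
    (hmax : ∀ e, IsMergeable G e → ∃ f ∈ M, ∃ v ∈ e, v ∈ f) :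
    (Fintype.card V - 5 / 6 * #G.edgeFinset : ℚ) ≤ #M := by
  have : Nontrivial V := Fintype.one_lt_card_iff_nontrivial.1 (by omega)
  calc (Fintype.card V - 5 / 6 * #G.edgeFinset : ℚ)
      = ∑ e ∈ G.edgeFinset, charge G e :=
        (sum_charge fun v => hG.degree_pos_of_nontrivial v).symm
    _ ≤ ∑ f ∈ M, ∑ e ∈ G.edgeFinset with ∃ v ∈ e, v ∈ f, (charge G e)⁺ :=
        sum_le_sum_sum_filter_posPart _ fun e he hpos =>
          hmax e (isMergeable_of_charge_pos hdeg (mem_edgeFinset.1 he) hpos)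
    _ ≤ ∑ _f ∈ M, 1 :=
        sum_le_sum fun f hf => sum_posPart_charge_meeting_le_one hG hcard (hM f hf)
    _ = #M := by simp

end Graph

theorem stmt0_general {V : Type*} [Fintype V]
    (G : SimpleGraph V) [DecidableRel G.Adj]
    (hG : G.Preconnected) (hE : #G.edgeFinset ≤ Fintype.card V) (hN : 2 ≤ Fintype.card V)
    (hdeg : ∀ v : V, G.degree v ≤ 3)
    (M : Finset (Sym2 V))
    (hME : ↑M ⊆ G.edgeSet)
    (hmerge : ∀ e ∈ M, ∃ u v : V, e = s(u, v) ∧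
      ({G.degree u, G.degree v} : Multiset ℕ) ∈
        ({{1, 1}, {1, 2}, {2, 2}, {1, 3}} : Set (Multiset ℕ)))
    (hmax : ∀ u v : V, G.Adj u v →
      ({G.degree u, G.degree v} : Multiset ℕ) ∈
        ({{1, 1}, {1, 2}, {2, 2}, {1, 3}} : Set (Multiset ℕ)) →
      ∃ e ∈ M, u ∈ e ∨ v ∈ e) :
    Fintype.card V ≤ 6 * M.card := by
  classical
  have : Nontrivial V := Fintype.one_lt_card_iff_nontrivial.1 hN
  have hM : ∀ f ∈ M, IsMergeable G f := by
    intro f hf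
    obtain ⟨u, v, rfl, hpair⟩ := hmerge f hf
    exact isMergeable_mk_iff_pair_mem.2 ⟨hME hf, hpair⟩
  have hmeet : ∀ e, IsMergeable G e → ∃ f ∈ M, ∃ v ∈ e, v ∈ f := by
    rintro ⟨u, v⟩ he
    obtain ⟨huv, hpair⟩ := isMergeable_mk_iff_pair_mem.1 he
    simpa using hmax u v huv hpair
  obtain hcard | hcard := lt_or_ge (Fintype.card V) 5
  · have hpos : ∀ v, 0 < G.degree v := fun v => hG.degree_pos_of_nontrivial v
    obtain ⟨e, he⟩ := exists_isMergeable hpos hdeg hE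
    obtain ⟨f, hf, -⟩ := hmeet e he
    have := card_pos.2 ⟨f, hf⟩
    omega
  · have hbound := card_sub_le_card_of_isMergeable hG hcard hdeg hM hmeet
    have hE' : (#G.edgeFinset : ℚ) ≤ Fintype.card V := by exact_mod_cast hE
    have : (Fintype.card V : ℚ) ≤ 6 * #M := by linarith
    exact_mod_cast this

/-- Let `T` be a tree on `N ≥ 2` vertices in which every vertex has degree
at most 3, and let `M` be a maximal mergeable matching in `T` (a matching all of whose edges
are mergeable, such that every mergeable edge shares an endpoint with an edge of `M`).
Then `6 * |M| ≥ N`. An edge `{u,v}` is mergeable iff the unordered pair of degrees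
`{deg u, deg v}` is one of `{1,1}, {1,2}, {2,2}, {1,3}`. -/
theorem stmt0 {V : Type*} [Fintype V] [DecidableEq V]
    (G : SimpleGraph V) [DecidableRel G.Adj]
    (hT : G.IsTree) (hN : 2 ≤ Fintype.card V)
    (hdeg : ∀ v : V, G.degree v ≤ 3)
    (M : Finset (Sym2 V))
    (hME : ↑M ⊆ G.edgeSet)
    (hmatch : ∀ e ∈ M, ∀ f ∈ M, e ≠ f → ∀ v : V, v ∈ e → v ∉ f)
    (hmerge : ∀ e ∈ M, ∃ u v : V, e = s(u, v) ∧
      ({G.degree u, G.degree v} : Multiset ℕ) ∈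
        ({{1, 1}, {1, 2}, {2, 2}, {1, 3}} : Set (Multiset ℕ)))
    (hmax : ∀ u v : V, G.Adj u v →
      ({G.degree u, G.degree v} : Multiset ℕ) ∈
        ({{1, 1}, {1, 2}, {2, 2}, {1, 3}} : Set (Multiset ℕ)) →
      ∃ e ∈ M, u ∈ e ∨ v ∈ e) :
    Fintype.card V ≤ 6 * M.card := by
  have hE := hT.card_edgeFinset
  exact stmt0_general G hT.connected.preconnected (by omega) hN hdeg M hME hmerge hmax
end

section
/- Let T be a tree on N ≥ 2 vertices and let P be a maximal UFO clustering of T. Then 6·|P| ≤ 5·N, i.e., P has at most (5/6)·N blocks. (Equivalently, each round of UFO-tree contraction reduces the number of clusters by a factor of at least 5/6.) -/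
open SimpleGraph Finset

/-!
Call a vertex *low* if its degree is at most 2 and a *branch vertex* otherwise. Every pair block of
a maximal clustering merges an edge between low vertices, and every leaf attached to a branch vertex
is absorbed by it, so if there are `f` pair edges and `A` such leaves, then `|P| ≤ N - A - f`. It
remains to see `N ≤ 6 (A + f)`.

By maximality the pair edges dominate all edges between low vertices, so the low vertices they leave
uncovered form an independent set `R`. Counting edges, `∑_{v ∈ R} deg v + f ≤ N - 1`. Up to the
number `L` of leaves the left-hand sum is at least `2 |R|`, while `R` misses only the branch
vertices, of which there are at most `L - 2`, and at most `2 f` covered vertices; hence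
`N ≤ 3 L + 3 f - 5`. Finally, the leaves with a low neighbor, of which there are at least `L - A`,
inject into the pair edges unless two of them are attached to the same edge; these two then exhaust
the tree together with that edge, and `N ≤ 4 ≤ 6 f`.
-/

theorem eq_univ_of_preconnected_of_adj_closed {V : Type*} {G : SimpleGraph V}
    (hG : G.Preconnected) {s : Set V} (hs : s.Nonempty)
    (hclosed : ∀ a ∈ s, ∀ b, G.Adj a b → b ∈ s) : s = Set.univ := by
  obtain ⟨x, hx⟩ := hs
  by_contra hne
  obtain ⟨y, hy⟩ := (Set.ne_univ_iff_exists_notMem s).1 hne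
  obtain ⟨p⟩ := hG x y
  obtain ⟨d, -, hfst, hsnd⟩ := p.exists_boundary_dart s hx hy
  exact hsnd (hclosed _ hfst _ d.adj)

theorem sum_card_inter_parts_eq_card {α : Type*} [DecidableEq α] {s t : Finset α}
    (P : Finpartition s) (hts : t ⊆ s) : ∑ b ∈ P.parts, #(t ∩ b) = #t := by
  have hunique : ∀ v ∈ t, #{b ∈ P.parts | v ∈ b} = 1 := fun v hv ↦ by
    refine card_eq_one.2 ⟨P.part v, ?_⟩
    ext b
    simp only [mem_filter, mem_singleton]
    constructor
    · rintro ⟨hb, hvb⟩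
      exact (P.part_eq_of_mem hb hvb).symm
    · rintro rfl
      exact ⟨P.part_mem.2 (hts hv), P.mem_part (hts hv)⟩
  rw [sum_card_inter hunique, mul_one]

section LocallyFinite

variable {V : Type*} {G : SimpleGraph V} [G.LocallyFinite]

theorem eq_of_adj_of_degree_eq_one {v a b : V} (hv : G.degree v = 1) (ha : G.Adj v a)
    (hb : G.Adj v b) : a = b :=
  (degree_eq_one_iff_existsUnique_adj.1 hv).unique ha hb

theorem eq_or_eq_of_adj_of_degree_le_two {v a b c : V} (hv : G.degree v ≤ 2) (ha : G.Adj v a)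
    (hb : G.Adj v b) (hab : a ≠ b) (hc : G.Adj v c) : c = a ∨ c = b := by
  by_contra! hne
  have hthree : 2 < #(G.neighborFinset v) := two_lt_card_iff.2
    ⟨a, b, c, by simpa using ha, by simpa using hb, by simpa using hc, hab, hne.1.symm, hne.2.symm⟩
  rw [card_neighborFinset_eq_degree] at hthree
  omega

theorem eq_or_eq_or_eq_of_adj_of_two_leaves {l l' x x' c : V} (hl : G.degree l = 1)
    (hl' : G.degree l' = 1) (hne : l ≠ l') (hx : G.degree x ≤ 2) (hlx : G.Adj l x)
    (hlx' : G.Adj l' x') (hxx' : x = x' ∨ G.Adj x x') (hc : G.Adj x c) :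
    c = l ∨ c = l' ∨ c = x' := by
  rcases hxx' with rfl | hxx'
  · have := eq_or_eq_of_adj_of_degree_le_two hx hlx.symm hlx'.symm hne hc
    tauto
  by_cases hlx'_eq : l = x'
  · subst hlx'_eq
    obtain rfl : l' = x := eq_of_adj_of_degree_eq_one hl hlx'.symm hlx
    exact Or.inr (Or.inr (eq_of_adj_of_degree_eq_one hl' hc hlx'))
  · have := eq_or_eq_of_adj_of_degree_le_two hx hlx.symm hxx' hlx'_eq hc
    tauto

theorem card_le_four_of_two_leaves [Fintype V] (hG : G.Preconnected) {l l' x x' : V}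
    (hl : G.degree l = 1) (hl' : G.degree l' = 1) (hne : l ≠ l') (hx : G.degree x ≤ 2)
    (hx' : G.degree x' ≤ 2) (hlx : G.Adj l x) (hlx' : G.Adj l' x')
    (hxx' : x = x' ∨ G.Adj x x') : Fintype.card V ≤ 4 := by
  classical
  have hclosed : ({l, l', x, x'} : Set V) = Set.univ := by
    refine eq_univ_of_preconnected_of_adj_closed hG ⟨l, by simp⟩ fun a ha b hab ↦ ?_
    simp only [Set.mem_insert_iff, Set.mem_singleton_iff] at ha ⊢
    rcases ha with rfl | rfl | rfl | rfl
    · have := eq_of_adj_of_degree_eq_one hl hab hlx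
      tauto
    · have := eq_of_adj_of_degree_eq_one hl' hab hlx'
      tauto
    · have := eq_or_eq_or_eq_of_adj_of_two_leaves hl hl' hne hx hlx hlx' hxx' hab
      tauto
    · have := eq_or_eq_or_eq_of_adj_of_two_leaves hl' hl hne.symm hx' hlx' hlx
        (hxx'.imp Eq.symm Adj.symm) hab
      tauto
  have huniv : ({l, l', x, x'} : Finset V) = univ := coe_eq_univ.1 (by simpa using hclosed)
  rw [← card_univ, ← huniv]
  exact card_le_four

theorem two_mul_card_add_card_branch_le_sum_degree_add_card_leaves {s : Finset V}
    (hpos : ∀ v ∈ s, 0 < G.degree v) :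
    2 * #s + #{v ∈ s | 3 ≤ G.degree v} ≤ ∑ v ∈ s, G.degree v + #{v ∈ s | G.degree v = 1} := by
  have hpointwise : ∑ v ∈ s, (2 + if 3 ≤ G.degree v then 1 else 0) ≤
      ∑ v ∈ s, (G.degree v + if G.degree v = 1 then 1 else 0) :=
    sum_le_sum fun v hv ↦ by
      have := hpos v hv
      split_ifs <;> omega
  simpa only [sum_add_distrib, sum_const, smul_eq_mul, mul_comm, card_filter] using hpointwise

end LocallyFinite

section FiniteGraph

variable {V : Type*} [Fintype V] {G : SimpleGraph V} [DecidableRel G.Adj]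

theorem card_branch_add_two_le_card_leaves [Nontrivial V] (hG : G.IsTree) :
    #{v | 3 ≤ G.degree v} + 2 ≤ #{v | G.degree v = 1} := by
  have hdegrees := two_mul_card_add_card_branch_le_sum_degree_add_card_leaves (s := univ)
    fun v _ ↦ hG.connected.preconnected.degree_pos_of_nontrivial v
  have hedges := hG.card_edgeFinset
  rw [G.sum_degrees_eq_twice_card_edges, card_univ] at hdegrees
  omega

theorem sum_degree_add_card_le_card_edgeFinset {R : Finset V} {F : Finset (Sym2 V)}
    (hR : G.IsIndepSet R) (hF : F ⊆ G.edgeFinset) (hFR : ∀ e ∈ F, ∀ v ∈ e, v ∉ R) :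
    ∑ v ∈ R, G.degree v + #F ≤ #G.edgeFinset := by
  classical
  have hdisjoint : (R : Set V).PairwiseDisjoint (G.incidenceFinset ·) := fun u hu v hv huv ↦
    disjoint_left.2 fun e heu hev ↦ hR hu hv huv <|
      G.adj_of_mem_incidenceSet huv ((G.mem_incidenceFinset u e).1 heu)
        ((G.mem_incidenceFinset v e).1 hev)
  have hF_disjoint : Disjoint (R.biUnion (G.incidenceFinset ·)) F := by
    refine disjoint_left.2 fun e he heF ↦ ?_
    obtain ⟨v, hv, hev⟩ := mem_biUnion.1 he
    exact hFR e heF v ((G.mem_incidenceFinset v e).1 hev).2 hv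
  calc ∑ v ∈ R, G.degree v + #F = #(R.biUnion (G.incidenceFinset ·) ∪ F) := by
        simp only [card_union_of_disjoint hF_disjoint, card_biUnion hdisjoint,
          card_incidenceFinset_eq_degree]
    _ ≤ #G.edgeFinset := card_le_card <| union_subset
        (biUnion_subset.2 fun v _ ↦ G.incidenceFinset_subset v) hF

variable (G) in
/-- The leaves attached to a branch vertex, that is, to a vertex of degree at least 3. These are
the leaves that a maximal UFO clustering absorbs into star blocks. -/
def branchLeaves : Finset V :=
  {v | G.degree v = 1 ∧ ∃ u, G.Adj v u ∧ 3 ≤ G.degree u}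

variable (G) in
/-- The leaves attached to a low vertex, that is, to a vertex of degree at most 2. -/
def lowLeaves : Finset V :=
  {v | G.degree v = 1 ∧ ∃ u, G.Adj v u ∧ G.degree u ≤ 2}

theorem notMem_branchLeaves_of_adj {u v : V} (huv : G.Adj u v) (hv : G.degree v ≤ 2) :
    u ∉ branchLeaves G := by
  simp only [branchLeaves, mem_filter_univ]
  rintro ⟨hu, w, huw, hw⟩
  obtain rfl : v = w := eq_of_adj_of_degree_eq_one hu huv huw
  omega

/-- `F` is an edge dominating set of the subgraph of `G` induced on the low vertices: it consists of
edges between vertices of degree at most 2, and every such edge shares an endpoint with a member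
of `F`. The pair blocks of a maximal UFO clustering form such a set. -/
structure IsLowEdgeDominating (G : SimpleGraph V) [DecidableRel G.Adj]
    (F : Finset (Sym2 V)) : Prop where
  subset_edgeFinset : F ⊆ G.edgeFinset
  degree_le_two : ∀ e ∈ F, ∀ v ∈ e, G.degree v ≤ 2
  dominates : ∀ u v, G.Adj u v → G.degree u ≤ 2 → G.degree v ≤ 2 → ∃ e ∈ F, u ∈ e ∨ v ∈ e

theorem card_leaves_le_card_branchLeaves_add_card_lowLeaves :
    #{v | G.degree v = 1} ≤ #(branchLeaves G) + #(lowLeaves G) := by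
  classical
  refine (card_le_card fun v hv ↦ ?_).trans (card_union_le _ _)
  have hv : G.degree v = 1 := by simpa using hv
  obtain ⟨u, hvu⟩ := (G.degree_pos_iff_exists_adj v).1 (by omega)
  simp only [branchLeaves, lowLeaves, mem_union, mem_filter_univ]
  rcases le_or_gt (G.degree u) 2 with hu | hu
  · exact Or.inr ⟨hv, u, hvu, hu⟩
  · exact Or.inl ⟨hv, u, hvu, hu⟩

variable (G) in
/-- The low vertices that are not an endpoint of any edge in `F`. -/
def uncoveredLow [DecidableEq V] (F : Finset (Sym2 V)) : Finset V :=
  {v | G.degree v ≤ 2 ∧ ∀ e ∈ F, v ∉ e}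

theorem card_le_card_branch_add_card_uncoveredLow [DecidableEq V] (F : Finset (Sym2 V)) :
    Fintype.card V ≤ #{v | 3 ≤ G.degree v} + #(uncoveredLow G F) + 2 * #F := by
  have hcover : (univ : Finset V) ⊆
      (({v | 3 ≤ G.degree v} : Finset V) ∪ uncoveredLow G F) ∪ F.biUnion Sym2.toFinset := by
    intro v _
    simp only [uncoveredLow, mem_union, mem_filter_univ, mem_biUnion, Sym2.mem_toFinset]
    grind
  have hcovered : #(F.biUnion Sym2.toFinset) ≤ #F * 2 := by
    refine card_biUnion_le_card_mul _ _ _ fun e _ ↦ ?_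
    rw [Sym2.card_toFinset]
    split_ifs <;> omega
  have hunion := card_union_le ({v | 3 ≤ G.degree v} : Finset V) (uncoveredLow G F)
  have hunion' := (card_le_card hcover).trans (card_union_le _ _)
  rw [card_univ] at hunion'
  omega

namespace IsLowEdgeDominating

variable {F : Finset (Sym2 V)}

theorem isIndepSet_uncoveredLow [DecidableEq V] (hF : IsLowEdgeDominating G F) :
    G.IsIndepSet (uncoveredLow G F) := by
  intro u hu v hv _ huv
  simp only [uncoveredLow, coe_filter_univ, Set.mem_ofPred_eq] at hu hv
  obtain ⟨e, he, hue | hve⟩ := hF.dominates u v huv hu.1 hv.1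
  · exact hu.2 e he hue
  · exact hv.2 e he hve

theorem exists_adj_mem_of_mem_lowLeaves (hF : IsLowEdgeDominating G F) {l : V}
    (hl : l ∈ lowLeaves G) : ∃ e ∈ F, ∃ x ∈ e, G.Adj l x := by
  obtain ⟨hl, u, hlu, hu⟩ : G.degree l = 1 ∧ ∃ u, G.Adj l u ∧ G.degree u ≤ 2 := by
    simpa [lowLeaves] using hl
  obtain ⟨e, he, hle | hue⟩ := hF.dominates l u hlu (by omega) hu
  · obtain ⟨x, rfl⟩ := hle
    exact ⟨_, he, x, Sym2.mem_mk_right l x, by simpa using hF.subset_edgeFinset he⟩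
  · exact ⟨e, he, u, hue, hlu⟩

theorem card_lowLeaves_le_of_four_lt_card (hG : G.Preconnected) (hF : IsLowEdgeDominating G F)
    (hV : 4 < Fintype.card V) : #(lowLeaves G) ≤ #F := by
  refine card_le_card_of_forall_subsingleton (fun l e ↦ ∃ x ∈ e, G.Adj l x)
    (fun l ↦ hF.exists_adj_mem_of_mem_lowLeaves) ?_
  rintro e he l ⟨hl, x, hxe, hlx⟩ l' ⟨hl', x', hxe', hlx'⟩
  simp only [lowLeaves, mem_filter_univ] at hl hl'
  by_contra hne
  have hxx' : x = x' ∨ G.Adj x x' := by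
    refine or_iff_not_imp_left.2 fun hxne ↦ ?_
    have he_eq : e = s(x, x') := (Sym2.mem_and_mem_iff hxne).1 ⟨hxe, hxe'⟩
    simpa [he_eq] using hF.subset_edgeFinset he
  have hfour := card_le_four_of_two_leaves hG hl.1 hl'.1 hne (hF.degree_le_two e he x hxe)
    (hF.degree_le_two e he x' hxe') hlx hlx' hxx'
  omega

theorem card_add_five_le_three_mul_leaves_add [Nontrivial V] (hG : G.IsTree)
    (hF : IsLowEdgeDominating G F) :
    Fintype.card V + 5 ≤ 3 * #{v | G.degree v = 1} + 3 * #F := by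
  classical
  have hbranch := card_branch_add_two_le_card_leaves hG
  have hcover := card_le_card_branch_add_card_uncoveredLow (G := G) F
  have hedges : ∑ v ∈ uncoveredLow G F, G.degree v + #F ≤ #G.edgeFinset :=
    sum_degree_add_card_le_card_edgeFinset hF.isIndepSet_uncoveredLow hF.subset_edgeFinset
      fun e he v hve hv ↦ ((mem_filter_univ v).1 hv).2 e he hve
  have huncovered := two_mul_card_add_card_branch_le_sum_degree_add_card_leaves
    (s := uncoveredLow G F) fun v _ ↦ hG.connected.preconnected.degree_pos_of_nontrivial v
  have hleaves : #{v ∈ uncoveredLow G F | G.degree v = 1} ≤ #{v | G.degree v = 1} :=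
    card_le_card (filter_subset_filter _ (subset_univ _))
  have htree := hG.card_edgeFinset
  omega

theorem card_add_two_le_three_mul_branchLeaves_add [Nontrivial V] (hG : G.IsTree)
    (hF : IsLowEdgeDominating G F) :
    Fintype.card V + 2 ≤ 3 * #(branchLeaves G) + 6 * #F := by
  have hcard := hF.card_add_five_le_three_mul_leaves_add hG
  have hleaves := card_leaves_le_card_branchLeaves_add_card_lowLeaves (G := G)
  rcases F.eq_empty_or_nonempty with rfl | hF_nonempty
  · have hlow : lowLeaves G = ∅ := eq_empty_of_forall_notMem fun l hl ↦ by
      simpa using hF.exists_adj_mem_of_mem_lowLeaves hl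
    rw [hlow, card_empty] at hleaves
    omega
  · have hF_pos : 0 < #F := hF_nonempty.card_pos
    rcases le_or_gt (Fintype.card V) 4 with hle | hlt
    · omega
    · have hlow := hF.card_lowLeaves_le_of_four_lt_card hG.connected.preconnected hlt
      omega

end IsLowEdgeDominating

variable [DecidableEq V]

/-- `P` is a maximal UFO clustering of `G`: every block is a singleton, a pair of adjacent vertices
of degree at most 2, or a star block consisting of a branch vertex and some of its leaves; every
branch vertex with leaves shares its block with all of them, and no edge between vertices of degree
at most 2 joins two singleton blocks. -/
structure IsMaximalUFOClustering (G : SimpleGraph V) [DecidableRel G.Adj]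
    (P : Finpartition (univ : Finset V)) : Prop where
  block_cases : ∀ b ∈ P.parts,
    (∃ v : V, b = {v}) ∨
    (∃ u v : V, u ≠ v ∧ G.Adj u v ∧ G.degree u ≤ 2 ∧ G.degree v ≤ 2 ∧ b = {u, v}) ∨
    (∃ (v : V) (S : Finset V), S.Nonempty ∧ v ∉ S ∧
      (∀ u ∈ S, G.Adj v u ∧ G.degree u = 1) ∧ 3 ≤ G.degree v ∧ b = insert v S)
  star_maximal : ∀ v : V, 3 ≤ G.degree v → (∃ u : V, G.Adj v u ∧ G.degree u = 1) →
    ∃ b ∈ P.parts, v ∈ b ∧ ∀ u : V, G.Adj v u → G.degree u = 1 → u ∈ b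
  pair_maximal : ¬ ∃ u v : V, G.Adj u v ∧ G.degree u ≤ 2 ∧ G.degree v ≤ 2 ∧
    ({u} : Finset V) ∈ P.parts ∧ ({v} : Finset V) ∈ P.parts

variable (G) in
/-- The edges of `G` whose endpoints form a pair block of `P`. The degree condition excludes the
star blocks with a single leaf, which also consist of two adjacent vertices. -/
def pairEdges (P : Finpartition (univ : Finset V)) : Finset (Sym2 V) :=
  {e ∈ G.edgeFinset | e.toFinset ∈ P.parts ∧ ∀ v ∈ e, G.degree v ≤ 2}

namespace IsMaximalUFOClustering

variable {P : Finpartition (univ : Finset V)}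

theorem notMem_branchLeaves_of_singleton_mem (hP : IsMaximalUFOClustering G P) {v : V}
    (hv : {v} ∈ P.parts) : v ∉ branchLeaves G := by
  simp only [branchLeaves, mem_filter_univ]
  rintro ⟨hdegree, u, hvu, hu⟩
  obtain ⟨b, hb, hub, hleaves⟩ := hP.star_maximal u hu ⟨v, hvu.symm, hdegree⟩
  obtain rfl : {v} = b :=
    P.eq_of_mem_parts hv hb (mem_singleton_self v) (hleaves v hvu.symm hdegree)
  exact hvu.ne' (mem_singleton.1 hub)

theorem singleton_mem_or_exists_mem_pairEdges (hP : IsMaximalUFOClustering G P) {u v : V}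
    (huv : G.Adj u v) (hu : G.degree u ≤ 2) (hv : G.degree v ≤ 2) :
    {u} ∈ P.parts ∨ ∃ e ∈ pairEdges G P, u ∈ e := by
  have hb : P.part u ∈ P.parts := P.part_mem.2 (mem_univ u)
  have hub : u ∈ P.part u := P.mem_part (mem_univ u)
  rcases hP.block_cases _ hb with ⟨w, hw⟩ | ⟨x, y, -, hxy, hx, hy, hpair⟩ |
    ⟨c, S, -, -, hS, hc, hstar⟩
  · left
    rw [hw, mem_singleton] at hub
    rwa [hw, ← hub] at hb
  · right
    refine ⟨s(x, y), ?_, by simpa [hpair] using hub⟩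
    rw [hpair] at hb
    simp [pairEdges, Sym2.toFinset_mk_eq, hxy, hb, hx, hy]
  · rw [hstar, mem_insert] at hub
    rcases hub with rfl | huS
    · omega
    · obtain ⟨hcu, hdegree⟩ := hS u huS
      have huA : u ∈ branchLeaves G := by
        simpa [branchLeaves, hdegree] using ⟨c, hcu.symm, hc⟩
      exact absurd huA (notMem_branchLeaves_of_adj huv hv)

theorem isLowEdgeDominating_pairEdges (hP : IsMaximalUFOClustering G P) :
    IsLowEdgeDominating G (pairEdges G P) where
  subset_edgeFinset := filter_subset _ _
  degree_le_two _ he := (mem_filter.1 he).2.2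
  dominates u v huv hu hv := by
    rcases hP.singleton_mem_or_exists_mem_pairEdges huv hu hv with hu_single | ⟨e, he, hue⟩
    · rcases hP.singleton_mem_or_exists_mem_pairEdges huv.symm hv hu with hv_single | ⟨e, he, hve⟩
      · exact absurd ⟨u, v, huv, hu, hv, hu_single, hv_single⟩ hP.pair_maximal
      · exact ⟨e, he, Or.inr hve⟩
    · exact ⟨e, he, Or.inl hue⟩

theorem card_branchLeaves_inter_add_pairEdges_add_one_le (hP : IsMaximalUFOClustering G P)
    {b : Finset V} (hb : b ∈ P.parts) :
    #(branchLeaves G ∩ b) + #{e ∈ pairEdges G P | e.toFinset = b} + 1 ≤ #b := by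
  rcases hP.block_cases b hb with ⟨v, rfl⟩ | ⟨u, v, huv, hadj, hu, hv, rfl⟩ |
    ⟨v, S, -, hvS, -, hv, rfl⟩
  · have hleaves : branchLeaves G ∩ {v} = ∅ := by
      simpa [← disjoint_iff_inter_eq_empty] using hP.notMem_branchLeaves_of_singleton_mem hb
    have hpairs : {e ∈ pairEdges G P | e.toFinset = {v}} = ∅ := by
      refine filter_eq_empty_iff.2 fun e he hev ↦ ?_
      have htwo := Sym2.card_toFinset_of_not_isDiag e
        (G.not_isDiag_of_mem_edgeFinset (mem_filter.1 he).1)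
      simp [hev] at htwo
    simp [hleaves, hpairs]
  · have hleaves : branchLeaves G ∩ {u, v} = ∅ := by
      have huA := notMem_branchLeaves_of_adj hadj hv
      have hvA := notMem_branchLeaves_of_adj hadj.symm hu
      grind
    have hpairs : #{e ∈ pairEdges G P | e.toFinset = {u, v}} ≤ 1 := by
      refine card_le_one.2 fun e he e' he' ↦ Sym2.ext fun x ↦ ?_
      rw [← Sym2.mem_toFinset, (mem_filter.1 he).2, ← (mem_filter.1 he').2, Sym2.mem_toFinset]
    rw [hleaves, card_empty, card_pair huv]
    omega
  · have hleaves : branchLeaves G ∩ insert v S ⊆ S := by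
      have hvA : v ∉ branchLeaves G := by
        simp only [branchLeaves, mem_filter_univ]
        omega
      grind
    have hpairs : {e ∈ pairEdges G P | e.toFinset = insert v S} = ∅ := by
      refine filter_eq_empty_iff.2 fun e he hev ↦ ?_
      have hve : v ∈ e := by
        rw [← Sym2.mem_toFinset, hev]
        exact mem_insert_self v S
      have := (mem_filter.1 he).2.2 v hve
      omega
    rw [hpairs, card_empty, card_insert_of_notMem hvS]
    exact Nat.succ_le_succ (card_le_card hleaves)

theorem card_parts_add_branchLeaves_add_pairEdges_le (hP : IsMaximalUFOClustering G P) :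
    #P.parts + #(branchLeaves G) + #(pairEdges G P) ≤ Fintype.card V := by
  have hblocks := sum_le_sum fun b hb ↦ hP.card_branchLeaves_inter_add_pairEdges_add_one_le hb
  have hleaves := sum_card_inter_parts_eq_card P (subset_univ (branchLeaves G))
  have hpairs : ∑ b ∈ P.parts, #{e ∈ pairEdges G P | e.toFinset = b} = #(pairEdges G P) :=
    (card_eq_sum_card_fiberwise fun e he ↦ (mem_filter.1 he).2.1).symm
  rw [sum_add_distrib, sum_add_distrib, hleaves, hpairs, P.sum_card_parts, card_univ, sum_const,
    smul_eq_mul, mul_one] at hblocks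
  omega

end IsMaximalUFOClustering

end FiniteGraph

/-- Let `T` be a tree on `N ≥ 2` vertices and `P` a maximal UFO clustering
of `T` (a partition whose blocks are singletons, adjacent pairs of vertices of degree ≤ 2,
or a vertex of degree ≥ 3 together with a nonempty set of its degree-1 neighbors; maximal
means every vertex of degree ≥ 3 with a degree-1 neighbor lies in one block with all of its
degree-1 neighbors, and no edge with both endpoints of degree ≤ 2 has both endpoints in
singleton blocks). Then `6 * |P| ≤ 5 * N`. -/
theorem stmt1 {V : Type*} [Fintype V] [DecidableEq V]
    (G : SimpleGraph V) [DecidableRel G.Adj]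
    (hT : G.IsTree) (hN : 2 ≤ Fintype.card V)
    (P : Finpartition (Finset.univ : Finset V))
    (hblocks : ∀ b ∈ P.parts,
      (∃ v : V, b = {v}) ∨
      (∃ u v : V, u ≠ v ∧ G.Adj u v ∧ G.degree u ≤ 2 ∧ G.degree v ≤ 2 ∧ b = {u, v}) ∨
      (∃ (v : V) (S : Finset V), S.Nonempty ∧ v ∉ S ∧
        (∀ u ∈ S, G.Adj v u ∧ G.degree u = 1) ∧ 3 ≤ G.degree v ∧ b = insert v S))
    (hmax1 : ∀ v : V, 3 ≤ G.degree v → (∃ u : V, G.Adj v u ∧ G.degree u = 1) →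
      ∃ b ∈ P.parts, v ∈ b ∧ ∀ u : V, G.Adj v u → G.degree u = 1 → u ∈ b)
    (hmax2 : ¬ ∃ u v : V, G.Adj u v ∧ G.degree u ≤ 2 ∧ G.degree v ≤ 2 ∧
      ({u} : Finset V) ∈ P.parts ∧ ({v} : Finset V) ∈ P.parts) :
    6 * P.parts.card ≤ 5 * Fintype.card V := by
  have : Nontrivial V := Fintype.one_lt_card_iff_nontrivial.1 hN
  have hP : IsMaximalUFOClustering G P := ⟨hblocks, hmax1, hmax2⟩
  have hsaved := hP.card_parts_add_branchLeaves_add_pairEdges_le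
  have hlarge := hP.isLowEdgeDominating_pairEdges.card_add_two_le_three_mul_branchLeaves_add hT
  omega
end

section
/- Let T be a tree on N > 4 vertices in which every vertex has degree 1 or degree 3. Then T contains a matching M such that every edge of M has at least one leaf endpoint and 4·|M| ≥ N; that is, at least half of the leaves can simultaneously be matched to their neighbors. -/
open SimpleGraph Finset

/-!
Match every vertex that has a leaf neighbour to one such leaf. To see that this uses many edges,
prune the leaves and let each non-leaf `v`, of remaining degree `d`, represent itself and its
`deg v - d` leaves. In the remaining forest the degrees sum to at most twice the number of
non-isolated vertices, so the sum of `2 - d` over these is nonnegative and may be added to the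
count. A non-leaf without leaf neighbours then contributes `1 + (2 - d) ≤ 0`, because
`d = deg v ≥ 3`, and one with leaf neighbours contributes at most `deg v + 1`. Hence each edge of
the matching accounts for at most `Δ + 1` vertices; the two leaves of a one-edge component, which
no non-leaf represents, share an edge.
-/

section Forest

variable {V : Type*} [Fintype V] {G : SimpleGraph V}

theorem card_edgeFinset_le_card_of_isAcyclic [Fintype G.edgeSet] (hG : G.IsAcyclic) :
    #G.edgeFinset ≤ Fintype.card V := by
  classical
  cases isEmpty_or_nonempty V
  · simp [Subsingleton.elim G ⊥]
  · obtain ⟨T, hGT, -, hT⟩ := connected_top.exists_isTree_le_of_le_of_isAcyclic le_top hG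
    calc #G.edgeFinset ≤ #T.edgeFinset := card_le_card (edgeFinset_mono hGT)
      _ ≤ Fintype.card V := Nat.le_of_succ_le hT.card_edgeFinset.le

theorem sum_degree_le_two_mul_card_of_isAcyclic [DecidableRel G.Adj] (hG : G.IsAcyclic) :
    ∑ v, G.degree v ≤ 2 * #{v | 0 < G.degree v} := by
  classical
  have hsupport : Fintype.card G.support = #{v | 0 < G.degree v} := by
    simp [Fintype.card_subtype, degree_pos_iff_mem_support]
  rw [sum_degrees_eq_twice_card_edges, ← card_edgeFinset_induce_support, ← hsupport]
  exact Nat.mul_le_mul_left 2 (card_edgeFinset_le_card_of_isAcyclic (hG.induce G.support))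

end Forest

section Leaves

theorem eq_of_adj_of_degree_eq_one_s5 {V : Type*} {G : SimpleGraph V} {u v w : V}
    [Fintype (G.neighborSet u)] (hu : G.degree u = 1) (hv : G.Adj u v) (hw : G.Adj u w) : v = w :=
  (degree_eq_one_iff_existsUnique_adj.mp hu).unique hv hw

variable {V : Type*} [Fintype V] (G : SimpleGraph V) [DecidableRel G.Adj]

/-- The neighbours of `v` that are leaves, i.e. the candidates for matching `v`. -/
def leafNeighborFinset (v : V) : Finset V := {u ∈ G.neighborFinset v | G.degree u = 1}

/-- The graph obtained by removing all edges at leaves, used to count the non-leaves; the leaves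
stay as isolated vertices, so that the vertex type does not change. -/
def pruneLeaves : SimpleGraph V where
  Adj u v := G.Adj u v ∧ G.degree u ≠ 1 ∧ G.degree v ≠ 1
  symm := ⟨fun _ _ ⟨h, hu, hv⟩ ↦ ⟨h.symm, hv, hu⟩⟩
  loopless := ⟨fun _ h ↦ G.irrefl h.1⟩

instance : DecidableRel (pruneLeaves G).Adj :=
  fun u v ↦ inferInstanceAs (Decidable (G.Adj u v ∧ G.degree u ≠ 1 ∧ G.degree v ≠ 1))

/-- The non-leaves that have a leaf neighbour; each gets a matching edge of its own. -/
def innerStems : Finset V := {v | G.degree v ≠ 1 ∧ (leafNeighborFinset G v).Nonempty}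

/-- The leaves that have a leaf neighbour, i.e. the vertices of the components with one edge; they
share a matching edge in pairs. -/
def leafStems : Finset V := {v | G.degree v = 1 ∧ (leafNeighborFinset G v).Nonempty}

variable {G}

theorem mem_leafNeighborFinset {u v : V} :
    u ∈ leafNeighborFinset G v ↔ G.Adj v u ∧ G.degree u = 1 := by
  simp [leafNeighborFinset]

theorem mem_innerStems {v : V} :
    v ∈ innerStems G ↔ G.degree v ≠ 1 ∧ (leafNeighborFinset G v).Nonempty := by
  simp [innerStems]

theorem mem_leafStems {v : V} :
    v ∈ leafStems G ↔ G.degree v = 1 ∧ (leafNeighborFinset G v).Nonempty := by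
  simp [leafStems]

theorem degree_pruneLeaves_add_card_leafNeighborFinset {v : V} (hv : G.degree v ≠ 1) :
    (pruneLeaves G).degree v + #(leafNeighborFinset G v) = G.degree v := by
  have hinner : (pruneLeaves G).neighborFinset v = {u ∈ G.neighborFinset v | ¬ G.degree u = 1} := by
    ext u
    simp only [mem_neighborFinset, mem_filter]
    exact and_congr_right fun _ ↦ and_iff_right hv
  rw [← card_neighborFinset_eq_degree, hinner, ← card_neighborFinset_eq_degree, add_comm]
  exact card_filter_add_card_filter_not _

theorem degree_pruneLeaves_eq_zero {v : V} (hv : G.degree v = 1) :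
    (pruneLeaves G).degree v = 0 :=
  Nat.eq_zero_of_not_pos fun hpos ↦
    let ⟨_, h⟩ := (degree_pos_iff_exists_adj _ v).mp hpos
    h.2.1 hv

variable (G) in
theorem sum_card_leafNeighborFinset :
    ∑ v, #(leafNeighborFinset G v) = #{u | G.degree u = 1} := by
  calc ∑ v, #(leafNeighborFinset G v)
      = ∑ v, #(bipartiteAbove G.Adj {u | G.degree u = 1} v) := by
        congr! 2 with v
        ext u
        simp [mem_leafNeighborFinset, and_comm]
    _ = ∑ u with G.degree u = 1, #(bipartiteBelow G.Adj univ u) :=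
        sum_card_bipartiteAbove_eq_sum_card_bipartiteBelow _
    _ = ∑ u with G.degree u = 1, 1 := by
        refine sum_congr rfl fun u hu ↦ ?_
        rw [← (mem_filter.mp hu).2, ← card_neighborFinset_eq_degree]
        congr 1
        ext v
        simp [adj_comm]
    _ = #{u | G.degree u = 1} := by simp

theorem card_le_mul_card_innerStems_add_card_leafStems (hG : G.IsAcyclic)
    (hdeg : ∀ v, G.degree v = 1 ∨ 3 ≤ G.degree v) :
    Fintype.card V ≤ (G.maxDegree + 1) * #(innerStems G) + #(leafStems G) := by
  classical
  have hpointwise (v : V) :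
      #(leafNeighborFinset G v) + (if ¬ G.degree v = 1 then 1 else 0)
          + 2 * (if 0 < (pruneLeaves G).degree v then 1 else 0) ≤
        (pruneLeaves G).degree v + (G.maxDegree + 1) * (if v ∈ innerStems G then 1 else 0)
          + (if v ∈ leafStems G then 1 else 0) := by
    have hmax := G.degree_le_maxDegree v
    have hle : #(leafNeighborFinset G v) ≤ G.degree v := card_filter_le _ _
    simp only [mem_innerStems, mem_leafStems, ← card_pos]
    rcases hdeg v with hv | hv
    · have := degree_pruneLeaves_eq_zero hv
      grind
    · have := degree_pruneLeaves_add_card_leafNeighborFinset (show G.degree v ≠ 1 by lia)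
      grind
  have hsum := sum_le_sum fun v (_ : v ∈ univ) ↦ hpointwise v
  simp only [sum_add_distrib, ← mul_sum, sum_boole, sum_card_leafNeighborFinset, Nat.cast_id,
    filter_mem_eq_inter, univ_inter] at hsum
  have hforest : ∑ v, (pruneLeaves G).degree v ≤ 2 * #{v | 0 < (pruneLeaves G).degree v} :=
    sum_degree_le_two_mul_card_of_isAcyclic (hG.anti fun _ _ h ↦ h.1)
  have hcard := card_filter_add_card_filter_not (s := univ) fun v ↦ G.degree v = 1
  rw [card_univ] at hcard
  lia

end Leaves

section Matching

variable {V : Type*} [Fintype V] {G : SimpleGraph V} [DecidableRel G.Adj]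

variable (G) in
/-- A matching all of whose edges contain a leaf, given by its finite set of edges. -/
structure IsPendantMatching (M : Finset (Sym2 V)) : Prop where
  subset_edgeSet : ↑M ⊆ G.edgeSet
  notMem_of_mem : ∀ e ∈ M, ∀ f ∈ M, e ≠ f → ∀ v : V, v ∈ e → v ∉ f
  exists_leaf_mem : ∀ e ∈ M, ∃ v ∈ e, G.degree v = 1

theorem mk_mate_eq_mk_mate_of_mem {mate : V → V} {v w x : V}
    (hv : mate v ∈ leafNeighborFinset G v) (hw : mate w ∈ leafNeighborFinset G w)
    (hxv : x ∈ s(v, mate v)) (hxw : x ∈ s(w, mate w)) : s(v, mate v) = s(w, mate w) := by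
  obtain ⟨hvadj, hvleaf⟩ := mem_leafNeighborFinset.mp hv
  obtain ⟨hwadj, hwleaf⟩ := mem_leafNeighborFinset.mp hw
  rcases Sym2.mem_iff.mp hxv with rfl | rfl <;> rcases Sym2.mem_iff.mp hxw with h | h
  · rw [h]
  · rw [← h] at hwadj hwleaf ⊢
    rw [eq_of_adj_of_degree_eq_one_s5 hwleaf hvadj hwadj.symm, Sym2.eq_swap]
  · rw [← h] at hwadj ⊢
    rw [eq_of_adj_of_degree_eq_one_s5 hvleaf hwadj hvadj.symm, Sym2.eq_swap]
  · rw [← h] at hwadj ⊢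
    rw [eq_of_adj_of_degree_eq_one_s5 hvleaf hvadj.symm hwadj.symm]

theorem eq_of_mk_eq_mk_of_degree {v a w b : V} (hv : G.degree v ≠ 1) (hb : G.degree b = 1)
    (h : s(v, a) = s(w, b)) : v = w :=
  (Sym2.mem_iff.mp (h ▸ Sym2.mem_mk_left v a)).resolve_right fun hvb ↦ hv (hvb ▸ hb)

theorem isPendantMatching_image_mk_mate [DecidableEq V] {S : Finset V} {mate : V → V}
    (hmate : ∀ v ∈ S, mate v ∈ leafNeighborFinset G v) :
    IsPendantMatching G (S.image fun v ↦ s(v, mate v)) where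
  subset_edgeSet := by
    rw [coe_image, Set.image_subset_iff]
    exact fun v hv ↦ (mem_leafNeighborFinset.mp (hmate v hv)).1
  notMem_of_mem := by
    simp only [forall_mem_image]
    exact fun v hv w hw hne x hxv hxw ↦
      hne (mk_mate_eq_mk_mate_of_mem (hmate v hv) (hmate w hw) hxv hxw)
  exists_leaf_mem := by
    simp only [forall_mem_image]
    exact fun v hv ↦ ⟨mate v, Sym2.mem_mk_right _ _, (mem_leafNeighborFinset.mp (hmate v hv)).2⟩

theorem card_le_two_mul_card_image_of_mem {α : Type*} [DecidableEq α] {S : Finset α}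
    {f : α → Sym2 α} (hf : ∀ a ∈ S, a ∈ f a) : #S ≤ 2 * #(S.image f) := by
  refine card_le_mul_card_image S 2 fun e _ ↦ ?_
  calc #{a ∈ S | f a = e} ≤ #e.toFinset := card_le_card fun a ha ↦ by
        obtain ⟨haS, rfl⟩ := mem_filter.mp ha
        exact Sym2.mem_toFinset.mpr (hf a haS)
    _ ≤ 2 := by
        rw [Sym2.card_toFinset]
        split_ifs <;> simp

variable (G) in
theorem exists_isPendantMatching_card_stems_le :
    ∃ M, IsPendantMatching G M ∧ 2 * #(innerStems G) + #(leafStems G) ≤ 2 * #M := by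
  classical
  have hstem : ∀ v ∈ innerStems G ∪ leafStems G, (leafNeighborFinset G v).Nonempty := by
    simp only [mem_union, mem_innerStems, mem_leafStems]
    tauto
  choose! mate hmate using hstem
  have hmateLeaf {v : V} (hv : v ∈ innerStems G ∪ leafStems G) : G.degree (mate v) = 1 :=
    (mem_leafNeighborFinset.mp (hmate v hv)).2
  have hinner : #((innerStems G).image fun v ↦ s(v, mate v)) = #(innerStems G) :=
    card_image_of_injOn fun v hv w hw h ↦
      eq_of_mk_eq_mk_of_degree (mem_innerStems.mp hv).1 (hmateLeaf (mem_union_left _ hw)) h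
  have houter : #(leafStems G) ≤ 2 * #((leafStems G).image fun v ↦ s(v, mate v)) :=
    card_le_two_mul_card_image_of_mem fun v _ ↦ Sym2.mem_mk_left v (mate v)
  have hdisjoint : Disjoint ((innerStems G).image fun v ↦ s(v, mate v))
      ((leafStems G).image fun v ↦ s(v, mate v)) := by
    simp only [Finset.disjoint_left, mem_image]
    rintro _ ⟨v, hv, rfl⟩ ⟨w, hw, h⟩
    have hvw : v = w :=
      eq_of_mk_eq_mk_of_degree (mem_innerStems.mp hv).1 (hmateLeaf (mem_union_right _ hw)) h.symm
    exact (mem_innerStems.mp hv).1 (hvw ▸ (mem_leafStems.mp hw).1)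
  refine ⟨_, isPendantMatching_image_mk_mate hmate, ?_⟩
  rw [image_union, card_union_of_disjoint hdisjoint]
  lia

end Matching

theorem stmt5_general {V : Type*} [Fintype V] (G : SimpleGraph V) [DecidableRel G.Adj]
    (hG : G.IsAcyclic) (hdeg : ∀ v, G.degree v = 1 ∨ 3 ≤ G.degree v) :
    ∃ M, IsPendantMatching G M ∧ Fintype.card V ≤ (G.maxDegree + 1) * #M := by
  obtain ⟨M, hM, hstems⟩ := exists_isPendantMatching_card_stems_le G
  refine ⟨M, hM, ?_⟩
  cases isEmpty_or_nonempty V with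
  | inl _ => simp
  | inr h =>
    have hmax : 1 ≤ G.maxDegree := by
      have := G.degree_le_maxDegree h.some
      have := hdeg h.some
      lia
    have hcard := card_le_mul_card_innerStems_add_card_leafStems hG hdeg
    refine Nat.le_of_mul_le_mul_left ?_ two_pos
    calc 2 * Fintype.card V
        ≤ (G.maxDegree + 1) * (2 * #(innerStems G)) + 2 * #(leafStems G) := by lia
      _ ≤ (G.maxDegree + 1) * (2 * #(innerStems G)) + (G.maxDegree + 1) * #(leafStems G) := by
        gcongr
        lia
      _ = (G.maxDegree + 1) * (2 * #(innerStems G) + #(leafStems G)) := (mul_add ..).symm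
      _ ≤ (G.maxDegree + 1) * (2 * #M) := Nat.mul_le_mul_left _ hstems
      _ = 2 * ((G.maxDegree + 1) * #M) := mul_left_comm ..

/-- Let `T` be a tree on `N > 4` vertices in which every vertex has degree
1 or degree 3. Then `T` contains a matching `M` such that every edge of `M` has at least one
leaf endpoint and `4 * |M| ≥ N`. -/
theorem stmt5 {V : Type*} [Fintype V] [DecidableEq V]
    (G : SimpleGraph V) [DecidableRel G.Adj]
    (hT : G.IsTree) (hN : 4 < Fintype.card V)
    (hdeg : ∀ v : V, G.degree v = 1 ∨ G.degree v = 3) :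
    ∃ M : Finset (Sym2 V), ↑M ⊆ G.edgeSet ∧
      (∀ e ∈ M, ∀ f ∈ M, e ≠ f → ∀ v : V, v ∈ e → v ∉ f) ∧
      (∀ e ∈ M, ∃ v ∈ e, G.degree v = 1) ∧
      Fintype.card V ≤ 4 * M.card := by
  obtain ⟨M, hM, hcard⟩ := stmt5_general G hT.isAcyclic fun v ↦ (hdeg v).imp_right Eq.ge
  have hmax : G.maxDegree ≤ 3 := G.maxDegree_le_of_forall_degree_le 3 fun v ↦ by grind
  exact ⟨M, hM.subset_edgeSet, hM.notMem_of_mem, hM.exists_leaf_mem,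
    hcard.trans (Nat.mul_le_mul_right _ (Nat.succ_le_succ hmax))⟩
end

section
/- Let T be a tree containing at least one vertex of degree at least 3. Then the number of vertices of degree 2 both of whose neighbors have degree at least 3 is at most one less than the number of vertices of degree at least 3. -/
open SimpleGraph Finset

/-!
Root the tree at a vertex `r` of the set `S` of vertices of degree at least 3. Of two neighbors of
`v` at most one is the parent of `v`, so a vertex with at least two neighbors in `S` has a child in
`S`. Choosing one such child is injective because parents are unique, and it never yields `r`. The
same count works for any nonempty `S` in a forest, once the forest is extended to a tree.
-/

section Rooted

variable {V : Type*} {G : SimpleGraph V} {r u v w : V}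

/-- `w` is a child of `v` when `G` is rooted at `r`: the vertices are adjacent and `w` is one step
further from `r`. The graph `G` may be disconnected, but `SimpleGraph.dist` is `0` between distinct
components, so only vertices in the component of `r` can have children. -/
def IsChild (G : SimpleGraph V) (r v w : V) : Prop :=
  G.Adj v w ∧ G.dist r w = G.dist r v + 1

theorem IsChild.ne_root (h : IsChild G r v w) : w ≠ r := by
  rintro rfl
  simpa using h.2

theorem IsChild.exists_isPath_penultimate_eq (h : IsChild G r v w) :
    ∃ p : G.Walk r w, p.IsPath ∧ p.penultimate = v := by
  have hr : G.Reachable r w := Reachable.of_dist_ne_zero (by simp [h.2])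
  obtain ⟨q, hq⟩ := (hr.trans h.1.symm.reachable).exists_walk_length_eq_dist
  have hpath : (q.concat h.1).IsPath :=
    Walk.isPath_of_length_eq_dist _ (by rw [Walk.length_concat, hq, h.2])
  exact ⟨q.concat h.1, hpath, Walk.penultimate_concat q h.1⟩

theorem IsChild.parent_unique (hG : G.IsAcyclic) (hu : IsChild G r u w) (hv : IsChild G r v w) :
    u = v := by
  obtain ⟨p, hp, rfl⟩ := hu.exists_isPath_penultimate_eq
  obtain ⟨q, hq, rfl⟩ := hv.exists_isPath_penultimate_eq
  have hpq : (⟨p, hp⟩ : G.Path r w) = ⟨q, hq⟩ := (hG.subsingleton_path r w).elim _ _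
  exact congrArg (fun P : G.Path r w ↦ P.1.penultimate) hpq

theorem isChild_or_isChild_of_adj (hG : G.IsAcyclic) (hr : G.Reachable r v) (h : G.Adj v w) :
    IsChild G r v w ∨ IsChild G r w v :=
  (hG.dist_eq_dist_add_one_of_adj_of_reachable r h hr).symm.imp (⟨h, ·⟩) (⟨h.symm, ·⟩)

theorem exists_isChild_of_nontrivial (hG : G.IsAcyclic) (hr : G.Reachable r v) {S : Set V}
    (hS : (G.neighborSet v ∩ S).Nontrivial) : ∃ w ∈ S, IsChild G r v w := by
  obtain ⟨a, ⟨hva, haS⟩, b, ⟨hvb, hbS⟩, hab⟩ := hS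
  rcases isChild_or_isChild_of_adj hG hr hva with ha | ha
  · exact ⟨a, haS, ha⟩
  rcases isChild_or_isChild_of_adj hG hr hvb with hb | hb
  · exact ⟨b, hbS, hb⟩
  exact absurd (ha.parent_unique hG hb) hab

theorem encard_add_one_le_of_forall_exists_isChild (hG : G.IsAcyclic) {A S : Set V} (hr : r ∈ S)
    (h : ∀ v ∈ A, ∃ w ∈ S, IsChild G r v w) : A.encard + 1 ≤ S.encard := by
  choose! child hchild_mem hchild using h
  have hmaps : Set.MapsTo child A (S \ {r}) := fun v hv ↦ ⟨hchild_mem v hv, (hchild v hv).ne_root⟩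
  have hinj : Set.InjOn child A := fun u hu v hv huv ↦
    (hchild u hu).parent_unique hG (huv ▸ hchild v hv)
  calc
    A.encard + 1 ≤ (S \ {r}).encard + 1 :=
      add_le_add_left (Set.encard_le_encard_of_injOn hmaps hinj) 1
    _ = S.encard := Set.encard_sdiff_singleton_add_one hr

end Rooted

theorem neighborSet_inter_nontrivial_of_one_lt_degree {V : Type*} {G : SimpleGraph V} {v : V}
    [Fintype (G.neighborSet v)] {S : Set V} (hv : 1 < G.degree v) (hS : G.neighborSet v ⊆ S) :
    (G.neighborSet v ∩ S).Nontrivial := by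
  rwa [Set.inter_eq_left.2 hS, ← Set.nontrivial_coe_sort, ← Fintype.one_lt_card_iff_nontrivial,
    card_neighborSet_eq_degree]

theorem stmt6_general {V : Type*} {G : SimpleGraph V} (hG : G.IsAcyclic) {S : Set V}
    (hS : S.Nonempty) : {v | (G.neighborSet v ∩ S).Nontrivial}.encard + 1 ≤ S.encard := by
  obtain ⟨r, hr⟩ := hS
  have : Nonempty V := ⟨r⟩
  obtain ⟨T, hGT, -, hT⟩ := connected_top.exists_isTree_le_of_le_of_isAcyclic le_top hG
  refine encard_add_one_le_of_forall_exists_isChild hT.isAcyclic hr fun v hv ↦ ?_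
  have hTv : (T.neighborSet v ∩ S).Nontrivial :=
    hv.mono (Set.inter_subset_inter_left S fun _ hw ↦ hGT hw)
  exact exists_isChild_of_nontrivial hT.isAcyclic (hT.connected r v) hTv

/-- Let `T` be a tree containing at least one vertex of degree at least 3.
Then the number of vertices of degree 2 both of whose neighbors have degree at least 3 is at
most one less than the number of vertices of degree at least 3. -/
theorem stmt6 {V : Type*} [Fintype V] [DecidableEq V]
    (G : SimpleGraph V) [DecidableRel G.Adj]
    (hT : G.IsTree) (hex : ∃ v : V, 3 ≤ G.degree v) :
    {v : V | G.degree v = 2 ∧ ∀ u : V, G.Adj v u → 3 ≤ G.degree u}.ncard + 1 ≤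
      {v : V | 3 ≤ G.degree v}.ncard := by
  rw [← Nat.cast_le (α := ℕ∞), Nat.cast_add_one, Set.coe_ncard_eq_encard, Set.coe_ncard_eq_encard]
  refine le_trans (add_le_add_left (Set.encard_le_encard ?_) 1) (stmt6_general hT.isAcyclic hex)
  exact fun v ⟨hv, hnbr⟩ ↦ neighborSet_inter_nontrivial_of_one_lt_degree (by lia) hnbr
end

section
/- Let T be a tree on N vertices. Then the number of vertices of degree 2 both of whose neighbors have degree at least 3 is strictly less than N/3. -/
open SimpleGraph Finset

/-!
A forest with at least one edge has fewer edges than non-isolated vertices, so these have average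
degree less than 2 and the vertices of degree at least 3 are outnumbered by those of degree 1. On
the other hand, if every vertex of `s` has two neighbors in a set `t` disjoint from `s`, then the
forest formed by the edges between `s` and `t` has at least `2 * #s` edges on `#s + #t` vertices,
whence `#s ≤ #t`. Taking for `s` the degree 2 vertices in question and for `t` the vertices of
degree at least 3, we find `#s ≤ #t < #L` for the set `L` of vertices of degree at most 1, and
`s`, `t`, `L` are disjoint.
-/

namespace Forest

variable {V : Type*} [Fintype V] {G : SimpleGraph V}

theorem card_edgeFinset_lt_card [Nonempty V] [Fintype G.edgeSet]
    (hG : G.IsAcyclic) : #G.edgeFinset < Fintype.card V := by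
  classical
  obtain ⟨T, hGT, -, hT⟩ := connected_top.exists_isTree_le_of_le_of_isAcyclic le_top hG
  calc #G.edgeFinset ≤ #T.edgeFinset := card_le_card (edgeFinset_mono hGT)
    _ < Fintype.card V := Nat.lt_of_succ_le hT.card_edgeFinset.le

variable [DecidableRel G.Adj]

theorem card_edgeFinset_lt_card_of_support_subset (hG : G.IsAcyclic) {s : Finset V}
    (hs : s.Nonempty) (hGs : G.support ⊆ s) : #G.edgeFinset < #s := by
  classical
  have : Nonempty (s : Set V) := hs.to_subtype
  calc #G.edgeFinset = #(G.induce (s : Set V)).edgeFinset := by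
        convert (card_edgeFinset_induce_of_support_subset hGs).symm
    _ < Fintype.card (s : Set V) := card_edgeFinset_lt_card (hG.induce _)
    _ = #s := by simp

theorem sum_degrees_support_lt (hG : G.IsAcyclic) (hne : G.support.Nonempty) :
    ∑ v ∈ G.support.toFinset, G.degree v < 2 * #G.support.toFinset := by
  rw [← Set.toFinset_nonempty] at hne
  have hlt := card_edgeFinset_lt_card_of_support_subset hG hne (by simp)
  calc ∑ v ∈ G.support.toFinset, G.degree v = 2 * #G.edgeFinset := by
        rw [sum_degrees_support_eq_twice_card_edges]
    _ < 2 * #G.support.toFinset := by lia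

theorem card_three_le_degree_lt_card_degree_le_one [Nonempty V] (hG : G.IsAcyclic) :
    #{v | 3 ≤ G.degree v} < #{v | G.degree v ≤ 1} := by
  let W : Finset V := G.support.toFinset
  obtain hempty | hne := G.support.eq_empty_or_nonempty
  · obtain rfl := G.support_eq_bot_iff.1 hempty
    simp [Fintype.card_pos]
  have hsum : ∑ v ∈ W, G.degree v < 2 * #W := sum_degrees_support_lt hG hne
  have hweights : 2 * #W + #{v ∈ W | 3 ≤ G.degree v} ≤
      ∑ v ∈ W, G.degree v + #{v ∈ W | G.degree v ≤ 1} := by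
    have hlocal : ∀ v ∈ W, 2 + (if 3 ≤ G.degree v then 1 else 0) ≤
        G.degree v + (if G.degree v ≤ 1 then 1 else 0) := by
      intro v hv
      have hpos := (G.degree_pos_iff_mem_support v).2 (Set.mem_toFinset.1 hv)
      lia
    simpa [sum_add_distrib, mul_comm] using sum_le_sum hlocal
  have hbranch : #{v | 3 ≤ G.degree v} ≤ #{v ∈ W | 3 ≤ G.degree v} := by
    refine card_le_card fun v hv ↦ ?_
    have hv : 3 ≤ G.degree v := (mem_filter_univ v).1 hv
    exact mem_filter.2
      ⟨Set.mem_toFinset.2 ((G.degree_pos_iff_mem_support v).1 (by lia)), hv⟩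
  have hleaf : #{v ∈ W | G.degree v ≤ 1} ≤ #{v | G.degree v ≤ 1} :=
    card_le_card (filter_subset_filter _ (subset_univ W))
  lia

theorem sum_card_neighborFinset_inter_lt [DecidableEq V] (hG : G.IsAcyclic) {s t : Finset V}
    (hs : s.Nonempty) (hst : Disjoint s t) :
    ∑ v ∈ s, #(G.neighborFinset v ∩ t) < #s + #t := by
  classical
  have hbip : (G.between s t).IsBipartiteWith s t :=
    between_isBipartiteWith (disjoint_coe.2 hst)
  have hdeg : ∀ v ∈ s, #(G.neighborFinset v ∩ t) = (G.between s t).degree v := by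
    intro v hv
    rw [← card_neighborFinset_eq_degree]
    congr 1
    ext w
    have hvt : v ∉ t := Finset.disjoint_left.1 hst hv
    simp [between_adj, hv, hvt]
  calc ∑ v ∈ s, #(G.neighborFinset v ∩ t) = #(G.between s t).edgeFinset := by
        rw [sum_congr rfl hdeg, isBipartiteWith_sum_degrees_eq_card_edges hbip]
    _ < #(s ∪ t) :=
        card_edgeFinset_lt_card_of_support_subset (hG.anti between_le) (hs.mono subset_union_left)
          (by simpa using isBipartiteWith_support_subset hbip)
    _ = #s + #t := card_union_of_disjoint hst

theorem card_le_card_of_two_le_card_neighborFinset_inter [DecidableEq V] (hG : G.IsAcyclic)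
    {s t : Finset V} (hst : Disjoint s t) (h : ∀ v ∈ s, 2 ≤ #(G.neighborFinset v ∩ t)) :
    #s ≤ #t := by
  obtain rfl | hs := s.eq_empty_or_nonempty
  · simp
  have hlower : #s * 2 ≤ ∑ v ∈ s, #(G.neighborFinset v ∩ t) := card_nsmul_le_sum s _ 2 h
  have hupper := sum_card_neighborFinset_inter_lt hG hs hst
  lia

end Forest

theorem stmt7_general {V : Type*} [Fintype V] [Nonempty V] (G : SimpleGraph V)
    [DecidableRel G.Adj] (hG : G.IsAcyclic) :
    3 * {v : V | G.degree v = 2 ∧ ∀ u : V, G.Adj v u → 3 ≤ G.degree u}.ncard <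
      Fintype.card V := by
  classical
  let S : Finset V := {v | G.degree v = 2 ∧ ∀ u, G.Adj v u → 3 ≤ G.degree u}
  let B : Finset V := {v | 3 ≤ G.degree v}
  let L : Finset V := {v | G.degree v ≤ 1}
  have hSB : Disjoint S B := disjoint_filter.2 fun _ _ _ ↦ by lia
  have hSBL : Disjoint (S ∪ B) L := by
    simp only [S, B, L, Finset.disjoint_left, mem_union, mem_filter_univ]
    lia
  have hSB_card : #S ≤ #B := by
    refine Forest.card_le_card_of_two_le_card_neighborFinset_inter hG hSB fun v hv ↦ ?_
    obtain ⟨hdeg, hnbr⟩ := (mem_filter_univ v).1 hv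
    have hsub : G.neighborFinset v ⊆ B := fun u hu ↦ by
      simpa [B] using hnbr u ((G.mem_neighborFinset v u).1 hu)
    rw [inter_eq_left.2 hsub, card_neighborFinset_eq_degree, hdeg]
  have hBL_card : #B < #L := Forest.card_three_le_degree_lt_card_degree_le_one hG
  calc 3 * {v : V | G.degree v = 2 ∧ ∀ u : V, G.Adj v u → 3 ≤ G.degree u}.ncard = 3 * #S := by
        rw [← Set.ncard_coe_finset, coe_filter_univ]
    _ < #S + #B + #L := by lia
    _ = #(S ∪ B ∪ L) := by rw [card_union_of_disjoint hSBL, card_union_of_disjoint hSB]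
    _ ≤ Fintype.card V := card_le_univ _

/-- Let `T` be a tree on `N` vertices. Then the number of vertices of
degree 2 both of whose neighbors have degree at least 3 is strictly less than `N / 3`. -/
theorem stmt7 {V : Type*} [Fintype V] [DecidableEq V]
    (G : SimpleGraph V) [DecidableRel G.Adj]
    (hT : G.IsTree) :
    3 * {v : V | G.degree v = 2 ∧ ∀ u : V, G.Adj v u → 3 ≤ G.degree u}.ncard <
      Fintype.card V := by
  have := hT.connected.nonempty
  exact stmt7_general G hT.isAcyclic
end
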